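/- Let (z_j) be a normalized block basis of the natural basis of X_p (i.e., the z_j have pairwise disjoint, consecutively ordered finite supports and ‖z_j‖ = 1), let (E_j) be pairwise disjoint subsets of ℕ with E_j contained in the support of z_j, and let c, δ > 0 satisfy, for all j: (a) |z_{j|E_j}|_2 ≥ δ·|z_j|_2 and (b) c·|z_{j|E_j}|_2 ≥ ω(E_j)^{(p-2)/(2p)}. Then the map Px = ∑_j |z_{j|E_j}|_2^{-2} ⟨z_{j|E_j}, x⟩ z_j defines a bounded linear projection from X_p onto the closed linear span of (z_j) with ‖P‖ ≤ max{δ^{-1}, c}. -/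

import Mathlib

open scoped ENNReal

noncomputable section

/-- The sequence space `ℓ_p` (of real sequences), for a real exponent `p`. -/
abbrev SeqP (p : ℝ) := lp (fun _ : ℕ => ℝ) (ENNReal.ofReal p)

/-- The sequence space `ℓ_2` (of real sequences). -/
abbrev Seq2 := lp (fun _ : ℕ => ℝ) 2

/-- The space `X_{p,w}`, realized as the submodule of `ℓ_p ⊕_∞ ℓ_2` consisting of the
pairs `(x, y)` with `y n = w n * x n`.  Since the norm on the product is the maximum of
the two norms, this is exactly the completion of the finitely supported sequences under
`‖a‖ = max {|a|_p, |a|_{2,w}}`, the element with coordinates `a` being identified with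
the pair `(a, w·a)`. -/
def XpwMod (p : ℝ) (w : ℕ → ℝ) : Submodule ℝ (SeqP p × Seq2) where
  carrier := {z | ∀ n, (z.2 : ℕ → ℝ) n = w n * (z.1 : ℕ → ℝ) n}
  add_mem' := by
    intro a b ha hb n
    simp only [Prod.fst_add, Prod.snd_add, lp.coeFn_add, Pi.add_apply, ha n, hb n]
    ring
  zero_mem' := by
    intro n
    simp
  smul_mem' := by
    intro c a ha n
    simp only [Prod.smul_fst, Prod.smul_snd, lp.coeFn_smul, Pi.smul_apply, ha n,
      smul_eq_mul]
    ring

/-- The space `X_{p,w}` with its natural norm `‖a‖ = max {|a|_p, |a|_{2,w}}`. -/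
def Xpw (p : ℝ) (w : ℕ → ℝ) : Type := ↥(XpwMod p w)

variable {p : ℝ} {w : ℕ → ℝ}

instance [Fact (1 ≤ ENNReal.ofReal p)] : NormedAddCommGroup (Xpw p w) :=
  inferInstanceAs (NormedAddCommGroup ↥(XpwMod p w))

instance [Fact (1 ≤ ENNReal.ofReal p)] : NormedSpace ℝ (Xpw p w) :=
  inferInstanceAs (NormedSpace ℝ ↥(XpwMod p w))

/-- The pair of coordinates (in `ℓ_p` and in weighted `ℓ_2`) of an element of `X_{p,w}`. -/
def Xpw.pair (x : Xpw p w) : SeqP p × Seq2 := (show ↥(XpwMod p w) from x).val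

/-- The underlying sequence of coordinates of an element of `X_{p,w}`. -/
def seq (x : Xpw p w) : ℕ → ℝ := (Xpw.pair x).1

/-- `|x|_p` for `x ∈ X_{p,w}`. -/
def nrmP (x : Xpw p w) : ℝ := ‖(Xpw.pair x).1‖

/-- `|x|_2 = |x|_{2,w}` for `x ∈ X_{p,w}`. -/
def nrm2 (x : Xpw p w) : ℝ := ‖(Xpw.pair x).2‖

/-- The ratio `r(x) = |x|_2 / |x|_p`. -/
def ratio (x : Xpw p w) : ℝ := nrm2 x / nrmP x

/-- `ω(E) = ∑_{n ∈ E} w_n^{2p/(p-2)}`. -/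
def omegaE (p : ℝ) (w : ℕ → ℝ) (E : Set ℕ) : ℝ :=
  ∑' n : E, w (n : ℕ) ^ (2 * p / (p - 2))

/-- The pairing `⟨x, y⟩ = ∑_n x_n y_n w_n²`. -/
def pairW (w : ℕ → ℝ) (x y : Xpw p w) : ℝ :=
  ∑' n, seq x n * seq y n * w n ^ 2

/-- `w` is a weight sequence suitable for Rosenthal's space `X_p`: it is positive and for
every `ε > 0`, `∑_{w_n < ε} w_n^{2p/(p-2)} = ∞`. -/
def IsXpWeight (p : ℝ) (w : ℕ → ℝ) : Prop :=
  (∀ n, 0 < w n) ∧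
    ∀ ε : ℝ, 0 < ε →
      (∑' n : {n : ℕ | w n < ε}, ENNReal.ofReal (w (n : ℕ) ^ (2 * p / (p - 2)))) = ⊤

theorem memℓp_indicator {q : ℝ≥0∞} (E : Set ℕ) {f : ℕ → ℝ} (hf : Memℓp f q) :
    Memℓp (E.indicator f) q := by
  rcases ENNReal.trichotomy q with hq | hq | hq
  · subst hq
    refine memℓp_zero ((memℓp_zero_iff.mp hf).subset ?_)
    intro i hi
    simp only [Set.mem_setOf_eq] at hi ⊢
    intro h
    exact hi (by simp [Set.indicator_apply, h])
  · subst hq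
    obtain ⟨C, hC⟩ := (memℓp_infty_iff.mp hf)
    refine memℓp_infty ⟨C, ?_⟩
    rintro x ⟨i, rfl⟩
    exact le_trans (norm_indicator_le_norm_self f i) (hC ⟨i, rfl⟩)
  · refine memℓp_gen (Summable.of_nonneg_of_le (fun i => ?_) (fun i => ?_)
      (hf.summable hq))
    · positivity
    · exact Real.rpow_le_rpow (norm_nonneg _) (norm_indicator_le_norm_self f i) hq.le

/-- The restriction `x ↦ x_{|E}` of elements of `X_{p,w}` to a set `E` of coordinates. -/
def restrict (E : Set ℕ) (x : Xpw p w) : Xpw p w :=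
  show ↥(XpwMod p w) from
  ⟨(⟨E.indicator ((Xpw.pair x).1 : ℕ → ℝ), memℓp_indicator E (lp.memℓp (Xpw.pair x).1)⟩,
    ⟨E.indicator ((Xpw.pair x).2 : ℕ → ℝ), memℓp_indicator E (lp.memℓp (Xpw.pair x).2)⟩), by
    intro n
    by_cases hn : n ∈ E
    · show E.indicator ((Xpw.pair x).2 : ℕ → ℝ) n = w n * E.indicator ((Xpw.pair x).1 : ℕ → ℝ) n
      rw [Set.indicator_of_mem hn, Set.indicator_of_mem hn]
      exact (show ↥(XpwMod p w) from x).2 n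
    · show E.indicator ((Xpw.pair x).2 : ℕ → ℝ) n = w n * E.indicator ((Xpw.pair x).1 : ℕ → ℝ) n
      rw [Set.indicator_of_notMem hn, Set.indicator_of_notMem hn, mul_zero]⟩


section helpers

lemma nn_rpow_sum {ι : Type*} (s : Finset ι) (u : ι → ℝ) {q : ℝ} (hq : 0 < q)
    (hu : ∀ i j, i ≠ j → u i = 0 ∨ u j = 0) :
    ‖∑ j ∈ s, u j‖ ^ q = ∑ j ∈ s, ‖u j‖ ^ q := by
  by_cases h : ∃ k ∈ s, u k ≠ 0
  · obtain ⟨k, hk, hk0⟩ := h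
    have h0 : ∀ j, j ≠ k → u j = 0 := fun j hj => (hu j k hj).resolve_right hk0
    rw [Finset.sum_eq_single_of_mem k hk (fun j _ hj => h0 j hj),
      Finset.sum_eq_single_of_mem k hk (fun j _ hj => by
        rw [h0 j hj, norm_zero, Real.zero_rpow hq.ne'])]
  · push Not at h
    rw [Finset.sum_eq_zero h, norm_zero, Real.zero_rpow hq.ne', Finset.sum_eq_zero]
    intro j hj
    rw [h j hj, norm_zero, Real.zero_rpow hq.ne']

lemma lp_norm_sum {q : ℝ≥0∞} (hq : 0 < q.toReal) [Fact (1 ≤ q)] (s : Finset ℕ)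
    (v : ℕ → lp (fun _ : ℕ => ℝ) q)
    (hv : ∀ i j, i ≠ j → ∀ n, v i n = 0 ∨ v j n = 0) :
    ‖∑ j ∈ s, v j‖ ^ q.toReal = ∑ j ∈ s, ‖v j‖ ^ q.toReal := by
  have h1 := lp.hasSum_norm hq (∑ j ∈ s, v j)
  have h2 := hasSum_sum (s := s) (fun j _ => lp.hasSum_norm hq (v j))
  refine h1.unique ?_
  convert h2 using 2 with n
  rw [lp.coeFn_sum, Finset.sum_apply]
  exact nn_rpow_sum s (fun j => v j n) hq (fun i j hij => hv i j hij n)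

lemma lp_norm_ind_sum {q : ℝ≥0∞} (hq : 0 < q.toReal) [Fact (1 ≤ q)] (s : Finset ℕ)
    (u : ℕ → lp (fun _ : ℕ => ℝ) q) (x : lp (fun _ : ℕ => ℝ) q) (E : ℕ → Set ℕ)
    (hdisj : Pairwise (Function.onFun Disjoint E))
    (hu : ∀ j n, u j n = (E j).indicator (x : ℕ → ℝ) n) :
    ∑ j ∈ s, ‖u j‖ ^ q.toReal ≤ ‖x‖ ^ q.toReal := by
  have h1 := lp.hasSum_norm hq x
  have h2 := hasSum_sum (s := s) (fun j _ => lp.hasSum_norm hq (u j))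
  refine hasSum_le (fun n => ?_) h2 h1
  have hd : ∀ i j, i ≠ j → u i n = 0 ∨ u j n = 0 := by
    intro i j hij
    by_contra! h
    rw [hu, hu] at h
    exact Set.disjoint_left.mp (hdisj hij) (Set.mem_of_indicator_ne_zero h.1)
      (Set.mem_of_indicator_ne_zero h.2)
  by_cases h : ∃ k ∈ s, u k n ≠ 0
  · obtain ⟨k, hk, hk0⟩ := h
    rw [Finset.sum_eq_single_of_mem k hk (fun j _ hj => by
        rw [(hd j k hj).resolve_right hk0, norm_zero, Real.zero_rpow hq.ne'])]
    rw [hu]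
    exact Real.rpow_le_rpow (norm_nonneg _) (norm_indicator_le_norm_self _ _) hq.le
  · push Not at h
    rw [Finset.sum_eq_zero (fun j hj => by
      rw [h j hj, norm_zero, Real.zero_rpow hq.ne'])]
    positivity

lemma lp_bound {q : ℝ≥0∞} (hq : 0 < q.toReal) [Fact (1 ≤ q)] (s : Finset ℕ)
    (v u : ℕ → lp (fun _ : ℕ => ℝ) q) (K : ℝ) (hK : 0 ≤ K)
    (hv : ∀ i j, i ≠ j → ∀ n, v i n = 0 ∨ v j n = 0)
    (hvu : ∀ j, ‖v j‖ ≤ K * ‖u j‖) :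
    ‖∑ j ∈ s, v j‖ ^ q.toReal ≤ K ^ q.toReal * ∑ j ∈ s, ‖u j‖ ^ q.toReal := by
  rw [lp_norm_sum hq s v hv, Finset.mul_sum]
  refine Finset.sum_le_sum fun j _ => ?_
  rw [← Real.mul_rpow hK (norm_nonneg _)]
  exact Real.rpow_le_rpow (norm_nonneg _) (hvu j) hq.le

lemma lp_norm_bound {q : ℝ≥0∞} (hq : 0 < q.toReal) [Fact (1 ≤ q)] (s : Finset ℕ)
    (v u : ℕ → lp (fun _ : ℕ => ℝ) q) (x : lp (fun _ : ℕ => ℝ) q) (E : ℕ → Set ℕ)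
    (hdisj : Pairwise (Function.onFun Disjoint E))
    (hu : ∀ j n, u j n = (E j).indicator (x : ℕ → ℝ) n) (K : ℝ) (hK : 0 ≤ K)
    (hv : ∀ i j, i ≠ j → ∀ n, v i n = 0 ∨ v j n = 0)
    (hvu : ∀ j, ‖v j‖ ≤ K * ‖u j‖) :
    ‖∑ j ∈ s, v j‖ ≤ K * ‖x‖ := by
  have h1 := lp_bound hq s v u K hK hv hvu
  have h2 := lp_norm_ind_sum hq s u x E hdisj hu
  have h3 : ‖∑ j ∈ s, v j‖ ^ q.toReal ≤ (K * ‖x‖) ^ q.toReal := by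
    rw [Real.mul_rpow hK (norm_nonneg _)]
    exact h1.trans (by gcongr)
  exact (Real.rpow_le_rpow_iff (norm_nonneg _) (by positivity) hq).mp h3

lemma lp_vanish {q : ℝ≥0∞} (hq : 0 < q.toReal) [Fact (1 ≤ q)]
    (v u : ℕ → lp (fun _ : ℕ => ℝ) q) (x : lp (fun _ : ℕ => ℝ) q) (E : ℕ → Set ℕ)
    (hdisj : Pairwise (Function.onFun Disjoint E))
    (hu : ∀ j n, u j n = (E j).indicator (x : ℕ → ℝ) n) (K : ℝ) (hK : 0 ≤ K)
    (hv : ∀ i j, i ≠ j → ∀ n, v i n = 0 ∨ v j n = 0)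
    (hvu : ∀ j, ‖v j‖ ≤ K * ‖u j‖) :
    Summable v := by
  have hs : Summable (fun j => K ^ q.toReal * ‖u j‖ ^ q.toReal) := by
    refine Summable.mul_left _ (summable_of_sum_le (fun j => by positivity)
      (fun s => lp_norm_ind_sum hq s u x E hdisj hu))
  rw [summable_iff_vanishing_norm] at hs ⊢
  intro ε hε
  obtain ⟨s, hs⟩ := hs (ε ^ q.toReal) (by positivity)
  refine ⟨s, fun t ht => ?_⟩
  have h1 := lp_bound hq t v u K hK hv hvu
  have h2 := (le_abs_self _).trans_lt (hs t ht)
  rw [← Finset.mul_sum] at h2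
  exact (Real.rpow_lt_rpow_iff (norm_nonneg _) hε.le hq).mp (h1.trans_lt h2)

variable {p : ℝ} {w : ℕ → ℝ}

def pairLM (p : ℝ) [Fact (1 ≤ ENNReal.ofReal p)] (w : ℕ → ℝ) :
    Xpw p w →ₗᵢ[ℝ] SeqP p × Seq2 := (XpwMod p w).subtypeₗᵢ

lemma pairLM_apply [Fact (1 ≤ ENNReal.ofReal p)] (x : Xpw p w) : pairLM p w x = x.pair := rfl

lemma pair_rel (x : Xpw p w) (n : ℕ) : x.pair.2 n = w n * x.pair.1 n :=
  (show ↥(XpwMod p w) from x).2 n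

lemma isClosed_Xpw [Fact (1 ≤ ENNReal.ofReal p)] :
    IsClosed (XpwMod p w : Set (SeqP p × Seq2)) := by
  have : (XpwMod p w : Set (SeqP p × Seq2)) =
      ⋂ n, {z | (z.2 : ℕ → ℝ) n = w n * (z.1 : ℕ → ℝ) n} := by
    ext z
    rw [Set.mem_iInter]
    exact Iff.rfl
  rw [this]
  refine isClosed_iInter fun n => isClosed_eq ?_ ?_
  · exact (lp.lipschitzWith_one_eval (E := fun _ : ℕ => ℝ) 2 n).continuous.comp continuous_snd
  · exact ((lp.lipschitzWith_one_eval (E := fun _ : ℕ => ℝ) (ENNReal.ofReal p)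
      n).continuous.comp continuous_fst).const_mul (w n)

instance [Fact (1 ≤ ENNReal.ofReal p)] : CompleteSpace (Xpw p w) :=
  (isClosed_Xpw (p := p) (w := w)).completeSpace_coe

lemma norm_Xpw [Fact (1 ≤ ENNReal.ofReal p)] (x : Xpw p w) :
    ‖x‖ = max ‖x.pair.1‖ ‖x.pair.2‖ := rfl

lemma summable_Xpw [Fact (1 ≤ ENNReal.ofReal p)] (v : ℕ → Xpw p w)
    (h1 : Summable fun j => (v j).pair.1) (h2 : Summable fun j => (v j).pair.2) :
    Summable v := by
  rw [summable_iff_vanishing_norm] at *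
  intro ε hε
  obtain ⟨s1, hs1⟩ := h1 ε hε
  obtain ⟨s2, hs2⟩ := h2 ε hε
  refine ⟨s1 ∪ s2, fun t ht => ?_⟩
  rw [Finset.disjoint_union_right] at ht
  rw [norm_Xpw, ← pairLM_apply, map_sum, Prod.fst_sum, Prod.snd_sum]
  exact max_lt (hs1 t ht.1) (hs2 t ht.2)

lemma pairW_eq (x y : Xpw p w) : pairW w x y = inner ℝ x.pair.2 y.pair.2 := by
  rw [lp.inner_eq_tsum, pairW]
  refine tsum_congr fun n => ?_
  rw [pair_rel, pair_rel]
  simp only [seq, RCLike.inner_apply, conj_trivial]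
  ring

lemma restrict_1 (E : Set ℕ) (x : Xpw p w) (n : ℕ) :
    (restrict E x).pair.1 n = E.indicator (x.pair.1 : ℕ → ℝ) n := rfl
lemma restrict_2 (E : Set ℕ) (x : Xpw p w) (n : ℕ) :
    (restrict E x).pair.2 n = E.indicator (x.pair.2 : ℕ → ℝ) n := rfl

lemma pairW_restrict (E : Set ℕ) (x y : Xpw p w) :
    pairW w (restrict E x) y = inner ℝ (restrict E x).pair.2 (restrict E y).pair.2 := by
  rw [pairW_eq, lp.inner_eq_tsum, lp.inner_eq_tsum]
  refine tsum_congr fun n => ?_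
  rw [restrict_2, restrict_2]
  by_cases h : n ∈ E <;> simp [h]

lemma holder_X [Fact (1 ≤ ENNReal.ofReal p)] (hp : 2 < p) (hw : ∀ n, 0 < w n) (E : Set ℕ) (hE : E.Finite) (x : Xpw p w) :
    ‖(restrict E x).pair.2‖ ≤
      ‖(restrict E x).pair.1‖ * omegaE p w E ^ ((p - 2) / (2 * p)) := by
  classical
  lift E to Finset ℕ using hE
  have hpt : (ENNReal.ofReal p).toReal = p := ENNReal.toReal_ofReal (by linarith)
  have e1 : ‖(restrict (E : Set ℕ) x).pair.1‖ ^ p = ∑ n ∈ E, |x.pair.1 n| ^ p := by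
    have := lp.norm_rpow_eq_tsum (by rw [hpt]; linarith) (restrict (E : Set ℕ) x).pair.1
    rw [hpt] at this
    rw [this, tsum_eq_sum (s := E)]
    · refine Finset.sum_congr rfl fun n hn => ?_
      rw [restrict_1, Set.indicator_of_mem (by simpa using hn), Real.norm_eq_abs]
    · intro n hn
      rw [restrict_1, Set.indicator_of_notMem (by simpa using hn), norm_zero,
        Real.zero_rpow (by linarith)]
  have e2 : ‖(restrict (E : Set ℕ) x).pair.2‖ ^ (2 : ℝ) =
      ∑ n ∈ E, x.pair.1 n ^ 2 * w n ^ 2 := by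
    have := lp.norm_rpow_eq_tsum (p := 2) (by simp) (restrict (E : Set ℕ) x).pair.2
    simp only [ENNReal.toReal_ofNat] at this
    rw [this, tsum_eq_sum (s := E)]
    · refine Finset.sum_congr rfl fun n hn => ?_
      rw [restrict_2, Set.indicator_of_mem (by simpa using hn), Real.norm_eq_abs, pair_rel,
        Real.rpow_two, sq_abs]
      ring
    · intro n hn
      rw [restrict_2, Set.indicator_of_notMem (by simpa using hn), norm_zero,
        Real.zero_rpow (by norm_num)]
  have e3 : omegaE p w (E : Set ℕ) = ∑ n ∈ E, w n ^ (2 * p / (p - 2)) := by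
    rw [omegaE]
    exact Finset.tsum_subtype' E (fun n => w n ^ (2 * p / (p - 2)))
  have hconj : (p / 2).HolderConjugate (p / (p - 2)) := by
    rw [Real.holderConjugate_iff]
    refine ⟨by linarith, ?_⟩
    have : p - 2 ≠ 0 := by linarith
    have : p ≠ 0 := by linarith
    field_simp
    ring
  have H := Real.inner_le_Lp_mul_Lq E (fun n => x.pair.1 n ^ 2) (fun n => w n ^ 2) hconj
  have f1 : ∀ n, |x.pair.1 n ^ 2| ^ (p / 2) = |x.pair.1 n| ^ p := by
    intro n
    rw [abs_pow, ← Real.rpow_two, ← Real.rpow_mul (abs_nonneg _)]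
    congr 1; ring
  have f2 : ∀ n, |w n ^ 2| ^ (p / (p - 2)) = w n ^ (2 * p / (p - 2)) := by
    intro n
    rw [abs_pow, abs_of_pos (hw n), ← Real.rpow_two, ← Real.rpow_mul (hw n).le]
    congr 1; ring
  simp only [f1, f2] at H
  rw [← e1, ← e2, ← e3] at H
  have ho : 0 ≤ omegaE p w (E : Set ℕ) := by
    rw [e3]
    exact Finset.sum_nonneg fun n _ => (Real.rpow_pos_of_pos (hw n) _).le
  have ho' : 0 ≤ omegaE p w (E : Set ℕ) ^ ((p - 2) / (2 * p)) := Real.rpow_nonneg ho _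
  refine (Real.rpow_le_rpow_iff (z := 2) (norm_nonneg _) (mul_nonneg (norm_nonneg _) ho')
    (by norm_num)).mp ?_
  refine H.trans (le_of_eq ?_)
  rw [Real.mul_rpow (norm_nonneg _) ho', ← Real.rpow_mul (norm_nonneg _),
    ← Real.rpow_mul ho]
  have : p - 2 ≠ 0 := by linarith
  have : p ≠ 0 := by linarith
  congr 2 <;> field_simp

end helpers

/-- Proposition 1.2, the projection: if `(z_j)` is a normalized block basis
of the natural basis of `X_p`, `(E_j)` are pairwise disjoint sets with `E_j` contained in
the support of `z_j`, and (a) `|z_{j|E_j}|_2 ≥ δ |z_j|_2`,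
(b) `c |z_{j|E_j}|_2 ≥ ω(E_j)^{(p-2)/(2p)}` for all `j`, then
`P x = ∑_j |z_{j|E_j}|_2⁻² ⟨z_{j|E_j}, x⟩ z_j` defines a bounded linear projection of
`X_p` onto the closed linear span of `(z_j)` of norm at most `max {δ⁻¹, c}`. -/
theorem stmt4 (p : ℝ) (hp : 2 < p) [Fact (1 ≤ ENNReal.ofReal p)]
    (w : ℕ → ℝ) (hw : IsXpWeight p w)
    (z : ℕ → Xpw p w) (hz1 : ∀ j, ‖z j‖ = 1)
    (hfin : ∀ j, (Function.support (seq (z j))).Finite)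
    (hblock : ∀ j k : ℕ, j < k → ∀ m ∈ Function.support (seq (z j)),
      ∀ n ∈ Function.support (seq (z k)), m < n)
    (E : ℕ → Set ℕ) (hE : ∀ j, E j ⊆ Function.support (seq (z j)))
    (hdisj : Pairwise (Function.onFun Disjoint E))
    (c δ : ℝ) (hc : 0 < c) (hδ : 0 < δ)
    (ha : ∀ j, nrm2 (restrict (E j) (z j)) ≥ δ * nrm2 (z j))
    (hb : ∀ j, c * nrm2 (restrict (E j) (z j)) ≥ omegaE p w (E j) ^ ((p - 2) / (2 * p))) :
    ∃ P : Xpw p w →L[ℝ] Xpw p w,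
      (∀ x : Xpw p w, P x =
        ∑' j : ℕ, ((nrm2 (restrict (E j) (z j)) ^ 2)⁻¹ *
          pairW w (restrict (E j) (z j)) x) • z j) ∧
      (∀ x : Xpw p w, P (P x) = P x) ∧
      LinearMap.range (P : Xpw p w →ₗ[ℝ] Xpw p w) = (Submodule.span ℝ (Set.range z)).topologicalClosure ∧
      ‖P‖ ≤ max δ⁻¹ c := by
  classical
  have hw0 := hw.1
  set y : ℕ → Xpw p w := fun j => restrict (E j) (z j) with hy
  set N : ℕ → ℝ := fun j => nrm2 (restrict (E j) (z j)) with hN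
  set A : ℕ → Xpw p w → ℝ := fun j x => (N j ^ 2)⁻¹ * pairW w (restrict (E j) (z j)) x with hA
  have hz2 : ∀ j, 0 < nrm2 (z j) := by
    intro j
    rcases (norm_nonneg (z j).pair.2).lt_or_eq with h | h
    · exact h
    · exfalso
      have h2 : (z j).pair.2 = 0 := norm_eq_zero.mp h.symm
      have h1 : (z j).pair.1 = 0 := by
        ext n
        have := pair_rel (z j) n
        rw [h2] at this
        have h3 : w n * (z j).pair.1 n = 0 := this.symm
        exact (mul_eq_zero.mp h3).resolve_left (hw0 n).ne'
      have := hz1 j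
      rw [norm_Xpw, h1, h2] at this
      simp at this
  have hNpos : ∀ j, 0 < N j := fun j => lt_of_lt_of_le (mul_pos hδ (hz2 j)) (ha j)
  have hzd : ∀ i j, i ≠ j → ∀ n, (z i).pair.1 n = 0 ∨ (z j).pair.1 n = 0 := by
    intro i j hij n
    by_contra! h
    rcases lt_or_gt_of_ne hij with hl | hl
    · exact lt_irrefl n (hblock i j hl n h.1 n h.2)
    · exact lt_irrefl n (hblock j i hl n h.2 n h.1)
  have hAb : ∀ j x, |A j x| ≤ (N j)⁻¹ * ‖(restrict (E j) x).pair.2‖ := by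
    intro j x
    have h1 : |pairW w (restrict (E j) (z j)) x| ≤ N j * ‖(restrict (E j) x).pair.2‖ := by
      rw [pairW_restrict]
      exact abs_real_inner_le_norm _ _
    have h2 : |A j x| = (N j ^ 2)⁻¹ * |pairW w (restrict (E j) (z j)) x| := by
      simp only [hA]
      rw [abs_mul, abs_of_nonneg (by positivity)]
    rw [h2]
    have := hNpos j
    calc _ ≤ (N j ^ 2)⁻¹ * (N j * ‖(restrict (E j) x).pair.2‖) := by gcongr
      _ = _ := by field_simp
  have hsm1 : ∀ (a : ℝ) (x : Xpw p w), (a • x).pair.1 = a • x.pair.1 := fun _ _ => rfl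
  have hsm2 : ∀ (a : ℝ) (x : Xpw p w), (a • x).pair.2 = a • x.pair.2 := fun _ _ => rfl
  have hbd2 : ∀ x j, ‖(A j x • z j).pair.2‖ ≤ δ⁻¹ * ‖(restrict (E j) x).pair.2‖ := by
    intro x j
    rw [hsm2, norm_smul, Real.norm_eq_abs]
    have h1 := hAb j x
    have h2 : ‖(z j).pair.2‖ ≤ δ⁻¹ * N j := by
      rw [inv_mul_eq_div, le_div_iff₀ hδ, mul_comm]
      exact ha j
    have := hNpos j
    calc _ ≤ ((N j)⁻¹ * ‖(restrict (E j) x).pair.2‖) * (δ⁻¹ * N j) := by gcongr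
      _ = _ := by field_simp
  have hbd1 : ∀ x j, ‖(A j x • z j).pair.1‖ ≤ c * ‖(restrict (E j) x).pair.1‖ := by
    intro x j
    rw [hsm1, norm_smul, Real.norm_eq_abs]
    have h1 := hAb j x
    have h2 : ‖(z j).pair.1‖ ≤ 1 := by
      rw [← hz1 j, norm_Xpw]
      exact le_max_left _ _
    have h3 := holder_X hp hw0 (E j) ((hfin j).subset (hE j)) x
    have h4 : omegaE p w (E j) ^ ((p - 2) / (2 * p)) ≤ c * N j := hb j
    have := hNpos j
    calc _ ≤ ((N j)⁻¹ * ‖(restrict (E j) x).pair.2‖) * 1 := by gcongr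
      _ ≤ ((N j)⁻¹ * (‖(restrict (E j) x).pair.1‖ * (c * N j))) * 1 := by
        gcongr
        exact h3.trans (by gcongr)
      _ = _ := by field_simp
  have hpt : 0 < (ENNReal.ofReal p).toReal := by
    rw [ENNReal.toReal_ofReal (by linarith)]; linarith
  have h2t : 0 < (2 : ℝ≥0∞).toReal := by simp
  have hvd1 : ∀ x i j, i ≠ j → ∀ n, (A i x • z i).pair.1 n = 0 ∨ (A j x • z j).pair.1 n = 0 := by
    intro x i j hij n
    rw [hsm1, hsm1]
    rcases hzd i j hij n with h | h
    · left; simp [h]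
    · right; simp [h]
  have hvd2 : ∀ x i j, i ≠ j → ∀ n, (A i x • z i).pair.2 n = 0 ∨ (A j x • z j).pair.2 n = 0 := by
    intro x i j hij n
    rw [pair_rel, pair_rel]
    rcases hvd1 x i j hij n with h | h
    · left; simp [h]
    · right; simp [h]
  have hsum : ∀ x, Summable fun j => A j x • z j := by
    intro x
    refine summable_Xpw _ ?_ ?_
    · exact lp_vanish hpt _ (fun j => (restrict (E j) x).pair.1) x.pair.1 E hdisj
        (fun j n => restrict_1 _ _ _) c hc.le (hvd1 x) (hbd1 x)
    · exact lp_vanish h2t _ (fun j => (restrict (E j) x).pair.2) x.pair.2 E hdisj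
        (fun j n => restrict_2 _ _ _) δ⁻¹ (by positivity) (hvd2 x) (hbd2 x)
  have hnorm : ∀ x, ‖∑' j, A j x • z j‖ ≤ max δ⁻¹ c * ‖x‖ := by
    intro x
    refine le_of_tendsto (hsum x).hasSum.norm (Filter.Eventually.of_forall fun s => ?_)
    rw [norm_Xpw, ← pairLM_apply, map_sum, Prod.fst_sum, Prod.snd_sum]
    have b1 := lp_norm_bound hpt s (fun j => (A j x • z j).pair.1)
      (fun j => (restrict (E j) x).pair.1) x.pair.1 E hdisj
        (fun j n => restrict_1 _ _ _) c hc.le (hvd1 x) (hbd1 x)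
    have b2 := lp_norm_bound h2t s (fun j => (A j x • z j).pair.2)
      (fun j => (restrict (E j) x).pair.2) x.pair.2 E hdisj
        (fun j n => restrict_2 _ _ _) δ⁻¹ (by positivity) (hvd2 x) (hbd2 x)
    have m1 : ‖x.pair.1‖ ≤ ‖x‖ := le_max_left _ _
    have m2 : ‖x.pair.2‖ ≤ ‖x‖ := le_max_right _ _
    refine max_le (b1.trans ?_) (b2.trans ?_)
    · exact mul_le_mul (le_max_right _ _) m1 (norm_nonneg _) (by positivity)
    · exact mul_le_mul (le_max_left _ _) m2 (norm_nonneg _) (by positivity)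
  have hAadd : ∀ j x x', A j (x + x') = A j x + A j x' := by
    intro j x x'
    simp only [hA, pairW_eq]
    rw [show (x + x').pair.2 = x.pair.2 + x'.pair.2 from rfl, inner_add_right]
    ring
  have hAsmul : ∀ j (r : ℝ) x, A j (r • x) = r * A j x := by
    intro j r x
    simp only [hA, pairW_eq]
    rw [hsm2, real_inner_smul_right]
    ring
  let P0 : Xpw p w →ₗ[ℝ] Xpw p w :=
    { toFun := fun x => ∑' j, A j x • z j
      map_add' := by
        intro x x'
        rw [← (hsum x).tsum_add (hsum x')]
        exact tsum_congr fun j => by rw [hAadd, add_smul]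
      map_smul' := by
        intro r x
        rw [RingHom.id_apply, ← (hsum x).tsum_const_smul r]
        exact tsum_congr fun j => by rw [hAsmul, mul_smul] }
  let P : Xpw p w →L[ℝ] Xpw p w := P0.mkContinuous (max δ⁻¹ c) hnorm
  have hP : ∀ x, P x = ∑' j, A j x • z j := fun x => rfl
  have hAz : ∀ j k, A j (z k) = if j = k then 1 else 0 := by
    intro j k
    simp only [hA]
    split_ifs with hjk
    · subst hjk
      rw [pairW_restrict, real_inner_self_eq_norm_sq]
      exact inv_mul_cancel₀ (pow_ne_zero 2 (hNpos j).ne')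
    · have : pairW w (restrict (E j) (z j)) (z k) = 0 := by
        rw [pairW]
        convert tsum_zero with n
        rcases hzd j k hjk n with h | h
        · have : seq (restrict (E j) (z j)) n = 0 := by
            change (restrict (E j) (z j)).pair.1 n = 0
            rw [restrict_1]
            by_cases hn : n ∈ E j <;> simp [hn, h]
          rw [this]; ring
        · have : seq (z k) n = 0 := h
          rw [this]; ring
      rw [this, mul_zero]
  have hPz : ∀ k, P (z k) = z k := by
    intro k
    rw [hP, tsum_eq_single k]
    · rw [hAz, if_pos rfl, one_smul]
    · intro j hj
      rw [hAz, if_neg hj, zero_smul]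
  set S := (Submodule.span ℝ (Set.range z)).topologicalClosure with hS
  have hPS : ∀ x ∈ S, P x = x := by
    have hcl : IsClosed {x | P x = x} := isClosed_eq P.continuous continuous_id
    have hsub : (Submodule.span ℝ (Set.range z) : Set (Xpw p w)) ⊆ {x | P x = x} := by
      intro x hx
      have : Submodule.span ℝ (Set.range z) ≤
          LinearMap.eqLocus (P : Xpw p w →ₗ[ℝ] Xpw p w) LinearMap.id := by
        rw [Submodule.span_le]
        rintro _ ⟨k, rfl⟩
        exact hPz k
      exact this hx
    intro x hx
    exact closure_minimal hsub hcl hx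
  have hPmem : ∀ x, P x ∈ S := by
    intro x
    have hcl : IsClosed (S : Set (Xpw p w)) := Submodule.isClosed_topologicalClosure _
    refine hcl.mem_of_tendsto (hsum x).hasSum (Filter.Eventually.of_forall fun s => ?_)
    exact Submodule.sum_mem _ fun j _ => Submodule.smul_mem _ _
      (Submodule.le_topologicalClosure _ (Submodule.subset_span ⟨j, rfl⟩))
  refine ⟨P, hP, fun x => hPS _ (hPmem x), ?_, ?_⟩
  · ext x
    constructor
    · rintro ⟨x', rfl⟩
      exact hPmem x'
    · intro hx
      exact ⟨x, hPS x hx⟩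
  · exact LinearMap.mkContinuous_norm_le _ (by positivity) _
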